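/- arXiv:1211.1054 — 4 statements merged into one kernel-verified Lean document; each statement's English description precedes it below -/
import Mathlib

section
/- Let δ > 1/2. There exists a constant C₀ > 0, depending only on δ, with the following property: for every τ ∈ ℝ with |τ| ≥ 1, every μ ≥ 0 with τ² ≠ μ, and every Schwartz function f : ℝ → ℂ, there exists a twice continuously differentiable function r : ℝ → ℂ satisfying −r''(x) + 2τ r'(x) + (μ − τ²) r(x) = f(x) for all x ∈ ℝ, together with the weighted estimates ∫_ℝ (1+x²)^{−δ} |r(x)|² dx ≤ (C₀²/τ²) ∫_ℝ (1+x²)^{δ} |f(x)|² dx and ∫_ℝ (1+x²)^{−δ} |r'(x)|² dx ≤ C₀² ∫_ℝ (1+x²)^{δ} |f(x)|² dx; moreover r is the unique twice continuously differentiable solution of this equation with ∫_ℝ (1+x²)^{−δ} |r(x)|² dx < ∞. -/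
open MeasureTheory

lemma aux_cs {α : Type*} [MeasurableSpace α] (ν : Measure α) {f g : α → ENNReal}
    (hf : AEMeasurable f ν) (hg : AEMeasurable g ν) :
    (∫⁻ x, f x * g x ∂ν) ^ 2 ≤ (∫⁻ x, f x ^ 2 ∂ν) * ∫⁻ x, g x ^ 2 ∂ν := by
  have h := ENNReal.lintegral_mul_le_Lp_mul_Lq ν Real.HolderConjugate.two_two hf hg
  simp only [Pi.mul_apply, ENNReal.rpow_two] at h
  have h2 := pow_le_pow_left₀ (zero_le) h 2
  refine h2.trans (le_of_eq ?_)
  rw [mul_pow, ← ENNReal.rpow_two, ← ENNReal.rpow_two, ← ENNReal.rpow_mul, ← ENNReal.rpow_mul]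
  norm_num

lemma aux_weight_exp (δ s : ℝ) (hδ : 0 < δ) (hs : 0 < s) :
    ∃ C > (0 : ℝ), ∀ x : ℝ, (1 + x ^ 2) ^ δ ≤ C * Real.exp (s * |x|) := by
  set q := s / δ with hq
  have hq0 : 0 < q := div_pos hs hδ
  refine ⟨(1 + 2 / q ^ 2) ^ δ, by positivity, fun x => ?_⟩
  have h1 : 1 + x ^ 2 ≤ (1 + 2 / q ^ 2) * Real.exp (q * |x|) := by
    have h := Real.quadratic_le_exp_of_nonneg (x := q * |x|) (by positivity)
    have h0 : 0 ≤ q * |x| := by positivity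
    have h3 : 1 ≤ Real.exp (q * |x|) := by nlinarith [sq_nonneg (q * |x|)]
    have h4 : q ^ 2 * x ^ 2 / 2 ≤ Real.exp (q * |x|) := by
      have : (q * |x|) ^ 2 = q ^ 2 * x ^ 2 := by rw [mul_pow, sq_abs]
      nlinarith
    have h5 : x ^ 2 = 2 / q ^ 2 * (q ^ 2 * x ^ 2 / 2) := by field_simp
    have h6 : x ^ 2 ≤ 2 / q ^ 2 * Real.exp (q * |x|) := by
      rw [h5]; gcongr
    nlinarith
  calc (1 + x ^ 2) ^ δ ≤ ((1 + 2 / q ^ 2) * Real.exp (q * |x|)) ^ δ := by gcongr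
    _ = _ := by
      rw [Real.mul_rpow (by positivity) (by positivity), ← Real.exp_mul]
      congr 2
      rw [hq]; field_simp

noncomputable def auxKer (a : ℝ) (s : ℝ) : ENNReal :=
  (Set.Ioi (0 : ℝ)).indicator (fun s => ENNReal.ofReal (Real.exp (-a * s))) s

lemma aux_measurable_ker (a : ℝ) : Measurable (auxKer a) := by
  unfold auxKer
  exact (by fun_prop : Measurable fun s : ℝ => ENNReal.ofReal (Real.exp (-a * s))).indicator
    measurableSet_Ioi

lemma aux_lint_ker (a : ℝ) (ha : 0 < a) : ∫⁻ s, auxKer a s = ENNReal.ofReal (1 / a) := by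
  unfold auxKer
  rw [lintegral_indicator measurableSet_Ioi, ← ofReal_integral_eq_lintegral_ofReal,
    integral_exp_mul_Ioi (by linarith)]
  · congr 1; simp
  · exact integrableOn_exp_mul_Ioi (by linarith) 0
  · exact Filter.Eventually.of_forall fun x => (Real.exp_pos _).le

lemma aux_ker_le_one (a : ℝ) (ha : 0 < a) (s : ℝ) : auxKer a s ≤ 1 := by
  unfold auxKer
  by_cases h : s ∈ Set.Ioi (0 : ℝ)
  · rw [Set.indicator_of_mem h]
    rw [← ENNReal.ofReal_one]
    apply ENNReal.ofReal_le_ofReal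
    rw [Real.exp_le_one_iff]
    have : 0 < s := h
    nlinarith [mul_pos ha this]
  · rw [Set.indicator_of_notMem h]; simp

lemma aux_ker_sq (a s : ℝ) : auxKer (a / 2) s ^ 2 = auxKer a s := by
  unfold auxKer
  by_cases h : s ∈ Set.Ioi (0 : ℝ)
  · rw [Set.indicator_of_mem h, Set.indicator_of_mem h, ← ENNReal.ofReal_pow (Real.exp_pos _).le,
      ← Real.exp_nat_mul]
    congr 2; push_cast; ring
  · rw [Set.indicator_of_notMem h, Set.indicator_of_notMem h]; simp

lemma aux_peetre (δ : ℝ) (hδ : 0 < δ) (y s : ℝ) :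
    (1 + (y - s) ^ 2) ^ δ ≤ 2 ^ δ * (1 + y ^ 2) ^ δ * (1 + s ^ 2) ^ δ := by
  rw [← Real.mul_rpow (by positivity) (by positivity), ← Real.mul_rpow (by positivity) (by positivity)]
  apply Real.rpow_le_rpow (by positivity) _ hδ.le
  nlinarith [sq_nonneg (y + s), sq_nonneg (y * s)]

lemma aux_schur (δ : ℝ) (hδ : 0 < δ) : ∃ K > (0 : ℝ), ∀ a : ℝ, 1 ≤ a → ∀ u g : ℝ → ℂ,
    Continuous g → (∀ x, ‖u x‖ₑ ≤ ∫⁻ y, auxKer a (y - x) * ‖g y‖ₑ) →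
    ∫⁻ x : ℝ, ENNReal.ofReal ((1 + x ^ 2) ^ δ * ‖u x‖ ^ 2) ≤
      ENNReal.ofReal (K / a ^ 2) * ∫⁻ x : ℝ, ENNReal.ofReal ((1 + x ^ 2) ^ δ * ‖g x‖ ^ 2) := by
  obtain ⟨C, hC, hCx⟩ := aux_weight_exp δ (1 / 2) hδ (by norm_num)
  refine ⟨2 ^ δ * C * 2, by positivity, fun a ha u g hg hu => ?_⟩
  have ha0 : 0 < a := by linarith
  have mk := aux_measurable_ker a
  have mk2 := aux_measurable_ker (a / 2)
  have mg : Measurable fun y => ‖g y‖ₑ := hg.measurable.enorm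
  have mw : Measurable fun x : ℝ => ENNReal.ofReal ((1 + x ^ 2) ^ δ) := by fun_prop
  have hpt : ∀ x, ‖u x‖ₑ ^ 2 ≤ ENNReal.ofReal (1 / a) * ∫⁻ y, auxKer a (y - x) * ‖g y‖ₑ ^ 2 := by
    intro x
    calc ‖u x‖ₑ ^ 2 ≤ (∫⁻ y, auxKer a (y - x) * ‖g y‖ₑ) ^ 2 := pow_le_pow_left₀ (zero_le) (hu x) 2
      _ = (∫⁻ y, auxKer (a / 2) (y - x) * (auxKer (a / 2) (y - x) * ‖g y‖ₑ)) ^ 2 := by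
        congr 2; ext y; rw [← aux_ker_sq a, pow_two, mul_assoc]
      _ ≤ _ := by
        refine (aux_cs volume (by fun_prop) (by fun_prop)).trans (le_of_eq ?_)
        simp only [mul_pow, aux_ker_sq]
        rw [lintegral_sub_right_eq_self (auxKer a) x, aux_lint_ker a ha0]
  have hker : ∀ y, ∫⁻ x, ENNReal.ofReal ((1 + x ^ 2) ^ δ) * auxKer a (y - x) ≤
      ENNReal.ofReal (2 ^ δ * C * 2 / a) * ENNReal.ofReal ((1 + y ^ 2) ^ δ) := by
    intro y
    calc ∫⁻ x, ENNReal.ofReal ((1 + x ^ 2) ^ δ) * auxKer a (y - x)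
        = ∫⁻ s, ENNReal.ofReal ((1 + (y - s) ^ 2) ^ δ) * auxKer a s := by
          rw [← lintegral_sub_left_eq_self _ y]
          simp
      _ ≤ ∫⁻ s, ENNReal.ofReal (2 ^ δ * C * (1 + y ^ 2) ^ δ) * auxKer (a / 2) s := by
          apply lintegral_mono
          intro s
          unfold auxKer
          by_cases h : s ∈ Set.Ioi (0 : ℝ)
          · have hs : 0 < s := h
            simp only [Set.indicator_of_mem h]
            rw [← ENNReal.ofReal_mul (by positivity), ← ENNReal.ofReal_mul (by positivity)]
            apply ENNReal.ofReal_le_ofReal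
            have h1 := aux_peetre δ hδ y s
            have h2 := hCx s
            rw [abs_of_pos hs] at h2
            have h3 : Real.exp (1 / 2 * s) * Real.exp (-a * s) ≤ Real.exp (-(a / 2) * s) := by
              rw [← Real.exp_add]
              apply Real.exp_le_exp.2
              nlinarith
            calc (1 + (y - s) ^ 2) ^ δ * Real.exp (-a * s)
                ≤ (2 ^ δ * (1 + y ^ 2) ^ δ * (C * Real.exp (1 / 2 * s))) * Real.exp (-a * s) := by
                  gcongr
                  refine h1.trans ?_
                  gcongr
              _ = 2 ^ δ * C * (1 + y ^ 2) ^ δ * (Real.exp (1 / 2 * s) * Real.exp (-a * s)) := by ring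
              _ ≤ _ := by gcongr
          · simp only [Set.indicator_of_notMem h]; simp
      _ = _ := by
          rw [lintegral_const_mul _ mk2, aux_lint_ker _ (by positivity),
            ← ENNReal.ofReal_mul (by positivity), ← ENNReal.ofReal_mul (by positivity)]
          congr 1; field_simp
  have hconv : ∀ (v : ℝ → ℂ) (x : ℝ), ENNReal.ofReal ((1 + x ^ 2) ^ δ * ‖v x‖ ^ 2) =
      ENNReal.ofReal ((1 + x ^ 2) ^ δ) * ‖v x‖ₑ ^ 2 := by
    intro v x
    rw [ENNReal.ofReal_mul (by positivity), ENNReal.ofReal_pow (norm_nonneg _), ofReal_norm]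
  simp only [hconv]
  calc ∫⁻ x : ℝ, ENNReal.ofReal ((1 + x ^ 2) ^ δ) * ‖u x‖ₑ ^ 2
      ≤ ∫⁻ x : ℝ, ENNReal.ofReal ((1 + x ^ 2) ^ δ) *
          (ENNReal.ofReal (1 / a) * ∫⁻ y, auxKer a (y - x) * ‖g y‖ₑ ^ 2) :=
        lintegral_mono fun x => mul_le_mul_right (hpt x) _
    _ = ∫⁻ x : ℝ, ENNReal.ofReal (1 / a) * ∫⁻ y,
          ENNReal.ofReal ((1 + x ^ 2) ^ δ) * (auxKer a (y - x) * ‖g y‖ₑ ^ 2) := by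
        congr 1; ext x
        rw [lintegral_const_mul _ (by fun_prop)]; ring
    _ = ENNReal.ofReal (1 / a) * ∫⁻ y, ∫⁻ x : ℝ,
          ENNReal.ofReal ((1 + x ^ 2) ^ δ) * (auxKer a (y - x) * ‖g y‖ₑ ^ 2) := by
        rw [lintegral_const_mul' _ _ ENNReal.ofReal_ne_top, lintegral_lintegral_swap]
        simp only [Function.uncurry_def]
        fun_prop
    _ = ENNReal.ofReal (1 / a) * ∫⁻ y, (∫⁻ x : ℝ,
          ENNReal.ofReal ((1 + x ^ 2) ^ δ) * auxKer a (y - x)) * ‖g y‖ₑ ^ 2 := by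
        congr 2; ext y
        rw [← lintegral_mul_const _ (by fun_prop)]
        simp only [mul_assoc]
    _ ≤ ENNReal.ofReal (1 / a) * ∫⁻ y, (ENNReal.ofReal (2 ^ δ * C * 2 / a) *
          ENNReal.ofReal ((1 + y ^ 2) ^ δ)) * ‖g y‖ₑ ^ 2 := by
        gcongr with y
        exact hker y
    _ = _ := by
        simp only [mul_assoc]
        rw [lintegral_const_mul' _ _ ENNReal.ofReal_ne_top, ← mul_assoc,
          ← ENNReal.ofReal_mul (by positivity)]
        congr 2; field_simp

lemma aux_first_pos (a : ℝ) (ha : 0 < a) (g : ℝ → ℂ) (hg : Continuous g) (hgi : Integrable g) :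
    ∃ u : ℝ → ℂ, (∀ x, HasDerivAt u ((a : ℂ) * u x + g x) x) ∧
      ∀ x, ‖u x‖ₑ ≤ ∫⁻ y, auxKer a (y - x) * ‖g y‖ₑ := by
  have hF : Continuous fun y : ℝ => Complex.exp (-(a : ℂ) * y) * g y := by fun_prop
  have hFi : ∀ x : ℝ, IntegrableOn (fun y : ℝ => Complex.exp (-(a : ℂ) * y) * g y) (Set.Ioi x) := by
    intro x
    refine Integrable.bdd_mul (c := Real.exp (-a * x)) hgi.integrableOn
      (by fun_prop : Continuous fun y : ℝ => Complex.exp (-(a : ℂ) * y)).aestronglyMeasurable ?_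
    refine (ae_restrict_iff' measurableSet_Ioi).2 (Filter.Eventually.of_forall fun y hy => ?_)
    have hy' : x < y := hy
    rw [Complex.norm_exp]
    apply Real.exp_le_exp.2
    simp
    nlinarith
  refine ⟨fun x => -(Complex.exp ((a : ℂ) * x) *
    ∫ y in Set.Ioi x, Complex.exp (-(a : ℂ) * y) * g y), fun x => ?_, fun x => ?_⟩
  · have h1 : ∀ x : ℝ, ∫ y in Set.Ioi x, Complex.exp (-(a : ℂ) * y) * g y =
        (∫ y in Set.Ioi (0 : ℝ), Complex.exp (-(a : ℂ) * y) * g y) -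
          ∫ y in (0 : ℝ)..x, Complex.exp (-(a : ℂ) * y) * g y := by
      intro x
      rw [← intervalIntegral.integral_interval_add_Ioi (hFi 0) (hFi x)]; ring
    have h2 : HasDerivAt (fun x : ℝ => ∫ y in Set.Ioi x, Complex.exp (-(a : ℂ) * y) * g y)
        (-(Complex.exp (-(a : ℂ) * x) * g x)) x := by
      rw [funext h1]
      exact (intervalIntegral.integral_hasDerivAt_right (hF.intervalIntegrable _ _)
        (hF.stronglyMeasurableAtFilter _ _) hF.continuousAt).const_sub _
    have h3 : HasDerivAt (fun x : ℝ => Complex.exp ((a : ℂ) * x))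
        (Complex.exp ((a : ℂ) * x) * a) x := by
      have : HasDerivAt (fun x : ℝ => (a : ℂ) * (x : ℂ)) (a : ℂ) x := by
        simpa using (Complex.ofRealCLM.hasDerivAt (x := x)).const_mul (a : ℂ)
      exact this.cexp
    refine (h3.mul h2).neg.congr_deriv ?_
    have h4 : Complex.exp ((a : ℂ) * x) * Complex.exp (-(a : ℂ) * x) = 1 := by
      rw [← Complex.exp_add]; simp
    linear_combination (g x) * h4
  · rw [enorm_neg, ← integral_const_mul]
    refine (enorm_integral_le_lintegral_enorm _).trans ?_
    rw [← lintegral_indicator measurableSet_Ioi]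
    apply lintegral_mono
    intro y
    by_cases h : y ∈ Set.Ioi x
    · have h' : y - x ∈ Set.Ioi (0 : ℝ) := by simpa using h
      simp only [auxKer, Set.indicator_of_mem h, Set.indicator_of_mem h']
      rw [← mul_assoc, enorm_mul, ← Complex.exp_add, ← ofReal_norm, Complex.norm_exp]
      apply le_of_eq
      congr 3
      simp; ring
    · simp only [Set.indicator_of_notMem h]; simp

lemma aux_first (δ : ℝ) (hδ : 0 < δ) : ∃ K > (0 : ℝ), ∀ a : ℝ, a ≠ 0 → ∀ g : ℝ → ℂ,
    Continuous g → Integrable g → ∃ u : ℝ → ℂ,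
      (∀ x, HasDerivAt u ((a : ℂ) * u x + g x) x) ∧
      (∀ x, ‖u x‖ₑ ≤ ∫⁻ y, ‖g y‖ₑ) ∧
      (1 ≤ |a| → ∫⁻ x : ℝ, ENNReal.ofReal ((1 + x ^ 2) ^ δ * ‖u x‖ ^ 2) ≤
        ENNReal.ofReal (K / a ^ 2) * ∫⁻ x : ℝ, ENNReal.ofReal ((1 + x ^ 2) ^ δ * ‖g x‖ ^ 2)) := by
  obtain ⟨K, hK, hKs⟩ := aux_schur δ hδ
  have pos : ∀ a : ℝ, 0 < a → ∀ g : ℝ → ℂ,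
    Continuous g → Integrable g → ∃ u : ℝ → ℂ,
      (∀ x, HasDerivAt u ((a : ℂ) * u x + g x) x) ∧
      (∀ x, ‖u x‖ₑ ≤ ∫⁻ y, ‖g y‖ₑ) ∧
      (1 ≤ |a| → ∫⁻ x : ℝ, ENNReal.ofReal ((1 + x ^ 2) ^ δ * ‖u x‖ ^ 2) ≤
        ENNReal.ofReal (K / a ^ 2) *
          ∫⁻ x : ℝ, ENNReal.ofReal ((1 + x ^ 2) ^ δ * ‖g x‖ ^ 2)) := by
    intro a ha g hg hgi
    obtain ⟨u, hu, hb⟩ := aux_first_pos a ha g hg hgi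
    refine ⟨u, hu, fun x => (hb x).trans (lintegral_mono fun y => ?_), fun h1 => ?_⟩
    · calc auxKer a (y - x) * ‖g y‖ₑ ≤ 1 * ‖g y‖ₑ := by
            gcongr
            exact aux_ker_le_one a ha _
        _ = _ := one_mul _
    · rw [abs_of_pos ha] at h1
      exact hKs a h1 u g hg hb
  refine ⟨K, hK, fun a ha g hg hgi => ?_⟩
  rcases lt_or_gt_of_ne ha with h | h
  · obtain ⟨v, hv, hb, hw⟩ := pos (-a) (by linarith) (fun x => -g (-x)) (by fun_prop) hgi.comp_neg.neg
    refine ⟨fun x => v (-x), fun x => ?_, fun x => ?_, fun h1 => ?_⟩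
    · have h2 := (hv (-x)).scomp x (hasDerivAt_neg x)
      refine h2.congr_deriv ?_
      simp
    · refine (hb (-x)).trans (le_of_eq ?_)
      simp only [enorm_neg]
      exact lintegral_neg_eq_self (fun y => ‖g y‖ₑ)
    · have h2 := hw (by simpa using h1)
      simp only [norm_neg, neg_sq] at h2
      rw [← lintegral_neg_eq_self (fun x : ℝ => ENNReal.ofReal ((1 + x ^ 2) ^ δ * ‖v x‖ ^ 2)),
        ← lintegral_neg_eq_self
          (fun x : ℝ => ENNReal.ofReal ((1 + x ^ 2) ^ δ * ‖g (-x)‖ ^ 2))] at h2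
      simpa using h2
  · exact pos a h g hg hgi

lemma aux_exp_deriv (a : ℝ) (x : ℝ) : HasDerivAt (fun x : ℝ => Complex.exp ((a : ℂ) * x))
    (Complex.exp ((a : ℂ) * x) * a) x := by
  have : HasDerivAt (fun x : ℝ => (a : ℂ) * (x : ℂ)) (a : ℂ) x := by
    simpa using (Complex.ofRealCLM.hasDerivAt (x := x)).const_mul (a : ℂ)
  exact this.cexp

lemma aux_ode (a : ℝ) (k : ℝ → ℂ) (hk : ∀ x, HasDerivAt k ((a : ℂ) * k x) x) (x : ℝ) :
    k x = k 0 * Complex.exp ((a : ℂ) * x) := by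
  have h1 : ∀ x, HasDerivAt (fun x : ℝ => k x * Complex.exp (((-a : ℝ) : ℂ) * x)) 0 x := by
    intro x
    refine ((hk x).mul (aux_exp_deriv (-a) x)).congr_deriv ?_
    push_cast; ring
  have h2 := is_const_of_deriv_eq_zero (fun x => (h1 x).differentiableAt)
    (fun x => (h1 x).deriv) x 0
  have h4 : Complex.exp (((-a : ℝ) : ℂ) * x) * Complex.exp ((a : ℂ) * x) = 1 := by
    rw [← Complex.exp_add]; simp
  simp only [Complex.ofReal_zero, mul_zero, Complex.exp_zero, mul_one] at h2
  rw [← h2, mul_assoc, h4, mul_one]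

lemma aux_sq (w : ℝ) (hw : 0 ≤ w) (y z : ℂ) : ENNReal.ofReal (w * ‖y + z‖ ^ 2) ≤
    2 * ENNReal.ofReal (w * ‖y‖ ^ 2) + 2 * ENNReal.ofReal (w * ‖z‖ ^ 2) := by
  have e : (2 : ENNReal) = ENNReal.ofReal 2 := by simp
  rw [e, ← ENNReal.ofReal_mul (by norm_num), ← ENNReal.ofReal_mul (by norm_num),
    ← ENNReal.ofReal_add (by positivity) (by positivity)]
  apply ENNReal.ofReal_le_ofReal
  have h1 : ‖y + z‖ ^ 2 ≤ (‖y‖ + ‖z‖) ^ 2 := by gcongr; exact norm_add_le _ _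
  have h2 : ‖y + z‖ ^ 2 ≤ 2 * ‖y‖ ^ 2 + 2 * ‖z‖ ^ 2 := by nlinarith [sq_nonneg (‖y‖ - ‖z‖)]
  nlinarith [mul_le_mul_of_nonneg_left h2 hw]

lemma aux_exp_not (δ : ℝ) (hδ : 0 < δ) (a : ℝ) (ha : a ≠ 0) (c : ℂ)
    (h : ∫⁻ x : ℝ, ENNReal.ofReal ((1 + x ^ 2) ^ (-δ) * ‖c * Complex.exp ((a : ℂ) * x)‖ ^ 2) < ⊤) :
    c = 0 := by
  by_contra hc
  obtain ⟨C, hC, hCx⟩ := aux_weight_exp δ (2 * |a|) hδ (by positivity)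
  have hlow : ∀ x : ℝ, 0 < a * x → ‖c‖ ^ 2 / C ≤
      (1 + x ^ 2) ^ (-δ) * ‖c * Complex.exp ((a : ℂ) * x)‖ ^ 2 := by
    intro x hx
    have h1 := hCx x
    have h2 : |a| * |x| = a * x := by rw [← abs_mul, abs_of_pos hx]
    have h3 : ‖c * Complex.exp ((a : ℂ) * x)‖ ^ 2 = ‖c‖ ^ 2 * Real.exp (2 * |a| * |x|) := by
      rw [norm_mul, mul_pow, Complex.norm_exp, ← Real.exp_nat_mul, mul_assoc 2, h2]
      simp
    rw [h3, Real.rpow_neg (by positivity)]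
    have h4 : 0 < (1 + x ^ 2) ^ δ := by positivity
    rw [div_le_iff₀ hC, inv_mul_eq_div, div_mul_eq_mul_div, le_div_iff₀ h4]
    have : 0 ≤ ‖c‖ ^ 2 := by positivity
    nlinarith [mul_le_mul_of_nonneg_left h1 this]
  have hpos : 0 < ‖c‖ ^ 2 / C := by positivity
  have key : ∀ S : Set ℝ, MeasurableSet S → volume S = ⊤ → (∀ x ∈ S, 0 < a * x) → False := by
    intro S hS hv hSx
    have : ∫⁻ x in S, ENNReal.ofReal (‖c‖ ^ 2 / C) ≤ ∫⁻ x : ℝ,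
        ENNReal.ofReal ((1 + x ^ 2) ^ (-δ) * ‖c * Complex.exp ((a : ℂ) * x)‖ ^ 2) := by
      refine le_trans (setLIntegral_mono_ae' hS ?_) (setLIntegral_le_lintegral S _)
      exact Filter.Eventually.of_forall fun x hx => ENNReal.ofReal_le_ofReal (hlow x (hSx x hx))
    rw [setLIntegral_const, hv, ENNReal.mul_top (by simpa using hpos)] at this
    exact absurd (this.trans_lt h) (by simp)
  rcases lt_or_gt_of_ne ha with h | h
  · exact key (Set.Iio 0) measurableSet_Iio (by simp)
      (fun x hx => mul_pos_of_neg_of_neg h hx)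
  · exact key (Set.Ioi 0) measurableSet_Ioi (by simp) (fun x hx => mul_pos h hx)

lemma aux_unique (δ : ℝ) (hδ : 0 < δ) (a b : ℝ) (ha : a ≠ 0) (hb : b ≠ 0) (h h1 : ℝ → ℂ)
    (hh : ∀ x, HasDerivAt h (h1 x) x)
    (hh1 : ∀ x, HasDerivAt h1 (((a : ℂ) + b) * h1 x - a * b * h x) x)
    (hfin : ∫⁻ x : ℝ, ENNReal.ofReal ((1 + x ^ 2) ^ (-δ) * ‖h x‖ ^ 2) < ⊤) (x : ℝ) : h x = 0 := by
  have hcont : Continuous h := continuous_iff_continuousAt.2 fun x => (hh x).continuousAt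
  set k : ℝ → ℂ := fun x => h1 x - b * h x with hk
  have hkd : ∀ x, HasDerivAt k ((a : ℂ) * k x) x := by
    intro x
    refine ((hh1 x).sub ((hh x).const_mul (b : ℂ))).congr_deriv ?_
    simp only [hk]; ring
  have hke := aux_ode a k hkd
  -- shifted difference is a pure exponential
  have hdiff : ∃ κ : ℂ, κ ≠ 0 ∧ ∀ x : ℝ, h (x + 1) + -(Complex.exp b) * h x =
      (κ * k 0) * Complex.exp ((a : ℂ) * x) := by
    by_cases hab : a = b
    · subst hab
      have hq : ∀ x, HasDerivAt (fun x : ℝ => h x - x * k x)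
          ((a : ℂ) * (h x - x * k x)) x := by
        intro x
        have hid : HasDerivAt (fun x : ℝ => (x : ℂ)) 1 x := by
          exact (Complex.ofRealCLM.hasDerivAt (x := x)).congr_deriv (by simp)
        refine ((hh x).sub (hid.mul (hkd x))).congr_deriv ?_
        simp only [hk]; ring
      have hqe := aux_ode a _ hq
      refine ⟨Complex.exp a, Complex.exp_ne_zero _, fun x => ?_⟩
      have e1 := hqe (x + 1)
      have e2 := hqe x
      have e3 := hke x
      have e4 := hke (x + 1)
      have e5 : Complex.exp ((a : ℂ) * ((x + 1 : ℝ) : ℂ)) =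
          Complex.exp ((a : ℂ) * x) * Complex.exp a := by
        rw [← Complex.exp_add]; push_cast; ring_nf
      simp only [Complex.ofReal_zero, zero_mul, sub_zero] at e1 e2
      rw [e5] at e1 e4
      push_cast at e1
      linear_combination e1 - Complex.exp a * e2 + (x + 1) * e4 - x * Complex.exp a * e3
    · have hab' : (a : ℂ) - b ≠ 0 := by
        rw [← Complex.ofReal_sub, Complex.ofReal_ne_zero]; exact sub_ne_zero.2 hab
      have hq : ∀ x, HasDerivAt (fun x : ℝ => ((a : ℂ) - b) * h x - k x)
          ((b : ℂ) * (((a : ℂ) - b) * h x - k x)) x := by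
        intro x
        refine (((hh x).const_mul ((a : ℂ) - b)).sub (hkd x)).congr_deriv ?_
        simp only [hk]; ring
      have hqe := aux_ode b _ hq
      refine ⟨(Complex.exp a - Complex.exp b) / (a - b), div_ne_zero ?_ hab', fun x => ?_⟩
      · rw [← Complex.ofReal_exp, ← Complex.ofReal_exp, ← Complex.ofReal_sub,
          Complex.ofReal_ne_zero]
        exact sub_ne_zero.2 fun he => hab (Real.exp_injective he)
      have e1 := hqe (x + 1)
      have e2 := hqe x
      have e3 := hke x
      have e4 := hke (x + 1)
      have e5 : ∀ a : ℝ, Complex.exp ((a : ℂ) * ((x + 1 : ℝ) : ℂ)) =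
          Complex.exp ((a : ℂ) * x) * Complex.exp a := by
        intro a
        rw [← Complex.exp_add]; push_cast; ring_nf
      rw [e5] at e1 e4
      field_simp
      linear_combination e1 - Complex.exp b * e2 + e4 - Complex.exp b * e3
  obtain ⟨κ, hκ, hκe⟩ := hdiff
  have hshift : ∫⁻ x : ℝ, ENNReal.ofReal ((1 + x ^ 2) ^ (-δ) * ‖h (x + 1)‖ ^ 2) < ⊤ := by
    calc ∫⁻ x : ℝ, ENNReal.ofReal ((1 + x ^ 2) ^ (-δ) * ‖h (x + 1)‖ ^ 2)
        ≤ ∫⁻ x : ℝ, ENNReal.ofReal (3 ^ δ) *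
            ENNReal.ofReal ((1 + (x + 1) ^ 2) ^ (-δ) * ‖h (x + 1)‖ ^ 2) := by
          apply lintegral_mono
          intro x
          simp only
          rw [← ENNReal.ofReal_mul (by positivity)]
          apply ENNReal.ofReal_le_ofReal
          rw [← mul_assoc]
          gcongr
          rw [Real.rpow_neg (by positivity), Real.rpow_neg (by positivity), ← div_eq_mul_inv,
            inv_eq_one_div, div_le_div_iff₀ (by positivity) (by positivity), one_mul,
            ← Real.mul_rpow (by positivity) (by positivity)]
          apply Real.rpow_le_rpow (by positivity) _ hδ.le
          nlinarith [sq_nonneg (x - 1)]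
      _ = ENNReal.ofReal (3 ^ δ) * ∫⁻ x : ℝ, ENNReal.ofReal ((1 + x ^ 2) ^ (-δ) * ‖h x‖ ^ 2) := by
          rw [lintegral_const_mul' _ _ ENNReal.ofReal_ne_top]
          congr 1
          exact lintegral_add_right_eq_self
            (fun x : ℝ => ENNReal.ofReal ((1 + x ^ 2) ^ (-δ) * ‖h x‖ ^ 2)) 1
      _ < ⊤ := ENNReal.mul_lt_top ENNReal.ofReal_lt_top hfin
  have hp : ∫⁻ x : ℝ, ENNReal.ofReal ((1 + x ^ 2) ^ (-δ) *
      ‖(κ * k 0) * Complex.exp ((a : ℂ) * x)‖ ^ 2) < ⊤ := by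
    calc ∫⁻ x : ℝ, ENNReal.ofReal ((1 + x ^ 2) ^ (-δ) *
          ‖(κ * k 0) * Complex.exp ((a : ℂ) * x)‖ ^ 2)
        ≤ ∫⁻ x : ℝ, (2 * ENNReal.ofReal ((1 + x ^ 2) ^ (-δ) * ‖h (x + 1)‖ ^ 2) +
            (2 * ENNReal.ofReal (‖Complex.exp b‖ ^ 2)) *
              ENNReal.ofReal ((1 + x ^ 2) ^ (-δ) * ‖h x‖ ^ 2)) := by
          apply lintegral_mono
          intro x
          simp only
          rw [← hκe x]
          refine (aux_sq _ (by positivity) _ _).trans (le_of_eq ?_)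
          rw [mul_assoc 2 (ENNReal.ofReal _), ← ENNReal.ofReal_mul (by positivity)]
          congr 3
          rw [norm_mul, norm_neg]; ring
      _ = 2 * (∫⁻ x : ℝ, ENNReal.ofReal ((1 + x ^ 2) ^ (-δ) * ‖h (x + 1)‖ ^ 2)) +
            (2 * ENNReal.ofReal (‖Complex.exp b‖ ^ 2)) *
              ∫⁻ x : ℝ, ENNReal.ofReal ((1 + x ^ 2) ^ (-δ) * ‖h x‖ ^ 2) := by
          have m : Measurable h := hcont.measurable
          rw [lintegral_add_left (by fun_prop), lintegral_const_mul' _ _ (by simp),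
            lintegral_const_mul' _ _ (ENNReal.mul_ne_top (by simp) ENNReal.ofReal_ne_top)]
      _ < ⊤ := ENNReal.add_lt_top.2 ⟨ENNReal.mul_lt_top (by simp) hshift,
          ENNReal.mul_lt_top (ENNReal.mul_lt_top (by simp) ENNReal.ofReal_lt_top) hfin⟩
  have hk0 : k 0 = 0 := (mul_eq_zero.1 (aux_exp_not δ hδ a ha _ hp)).resolve_left hκ
  have hhd : ∀ x, HasDerivAt h ((b : ℂ) * h x) x := by
    intro x
    refine (hh x).congr_deriv ?_
    have := hke x
    rw [hk0, zero_mul] at this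
    exact sub_eq_zero.1 this
  have hhe := aux_ode b h hhd
  have h0 : h 0 = 0 := by
    apply aux_exp_not δ hδ b hb
    have e : (fun x : ℝ => h 0 * Complex.exp ((b : ℂ) * x)) = h := funext fun x => (hhe x).symm
    simp_rw [← hhe]
    exact hfin
  rw [hhe x, h0, zero_mul]

lemma aux_schwartz_fin (δ : ℝ) (f : SchwartzMap ℝ ℂ) :
    ∫⁻ x : ℝ, ENNReal.ofReal ((1 + x ^ 2) ^ δ * ‖f x‖ ^ 2) < ⊤ := by
  have hg := Function.hasTemperateGrowth_one_add_norm_sq_rpow ℝ (δ / 2)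
  set F := SchwartzMap.smulLeftCLM ℂ (fun x : ℝ => (1 + ‖x‖ ^ 2) ^ (δ / 2)) f with hF
  have h := (F.memLp 2).integrable_norm_pow (by norm_num)
  have h2 := h.lintegral_lt_top
  refine lt_of_eq_of_lt ?_ h2
  congr 1; ext x
  rw [hF, SchwartzMap.smulLeftCLM_apply_apply hg, norm_smul, mul_pow]
  congr 2
  rw [Real.norm_of_nonneg (by positivity), ← Real.rpow_natCast ((1 + ‖x‖ ^ 2) ^ (δ / 2)), ← Real.rpow_mul (by positivity)]
  simp

theorem stmt2 (δ : ℝ) (hδ : 1 / 2 < δ) :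
    ∃ C₀ > (0 : ℝ), ∀ τ : ℝ, 1 ≤ |τ| → ∀ μ : ℝ, 0 ≤ μ → τ ^ 2 ≠ μ →
      ∀ f : SchwartzMap ℝ ℂ, ∃ r : ℝ → ℂ,
        ContDiff ℝ 2 r ∧
        (∀ x : ℝ, -(deriv (deriv r) x) + (2 * (τ : ℂ)) * deriv r x +
            ((μ : ℂ) - (τ : ℂ) ^ 2) * r x = f x) ∧
        (∫⁻ x : ℝ, ENNReal.ofReal ((1 + x ^ 2) ^ (-δ) * ‖r x‖ ^ 2) ≤
          ENNReal.ofReal (C₀ ^ 2 / τ ^ 2) *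
            ∫⁻ x : ℝ, ENNReal.ofReal ((1 + x ^ 2) ^ δ * ‖f x‖ ^ 2)) ∧
        (∫⁻ x : ℝ, ENNReal.ofReal ((1 + x ^ 2) ^ (-δ) * ‖deriv r x‖ ^ 2) ≤
          ENNReal.ofReal (C₀ ^ 2) *
            ∫⁻ x : ℝ, ENNReal.ofReal ((1 + x ^ 2) ^ δ * ‖f x‖ ^ 2)) ∧
        (∀ r' : ℝ → ℂ, ContDiff ℝ 2 r' →
          (∀ x : ℝ, -(deriv (deriv r') x) + (2 * (τ : ℂ)) * deriv r' x +
              ((μ : ℂ) - (τ : ℂ) ^ 2) * r' x = f x) →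
          (∫⁻ x : ℝ, ENNReal.ofReal ((1 + x ^ 2) ^ (-δ) * ‖r' x‖ ^ 2) < ⊤) →
          r' = r) := by
  have hδ0 : 0 < δ := by linarith
  obtain ⟨K, hK, hKs⟩ := aux_first δ hδ0
  -- the integral of the inverse weight
  have hwi : Integrable fun x : ℝ => (1 + x ^ 2) ^ (-δ) := by
    have := integrable_rpow_neg_one_add_norm_sq (E := ℝ) (μ := volume) (r := 2 * δ)
      (by simp; linarith)
    refine this.congr (Filter.Eventually.of_forall fun x => ?_)
    simp only [Real.norm_eq_abs, sq_abs]
    congr 1; ring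
  set J : ℝ := ∫ x : ℝ, (1 + x ^ 2) ^ (-δ) with hJ
  have hJ0 : 0 ≤ J := integral_nonneg fun x => by positivity
  have hJl : ∫⁻ x : ℝ, ENNReal.ofReal ((1 + x ^ 2) ^ (-δ)) = ENNReal.ofReal J :=
    (ofReal_integral_eq_lintegral_ofReal hwi
      (Filter.Eventually.of_forall fun x => by positivity)).symm
  set A : ℝ := 2 * K * (J ^ 2 + 1) with hA
  have hA0 : 0 < A := by positivity
  refine ⟨1 + A, by positivity, fun τ hτ μ hμ hne f => ?_⟩
  have hAC : A ≤ (1 + A) ^ 2 := by nlinarith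
  have hτ0 : τ ≠ 0 := by intro h; simp [h] at hτ; linarith
  -- the characteristic roots
  obtain ⟨a, b, hab, hmul, hτa, hba⟩ : ∃ a b : ℝ, a + b = 2 * τ ∧ a * b = τ ^ 2 - μ ∧
      |τ| ≤ |a| ∧ |b| ≤ |a| := by
    have hs := Real.sqrt_nonneg μ
    have hs2 := Real.sq_sqrt hμ
    rcases le_total 0 τ with h | h
    · refine ⟨τ + √μ, τ - √μ, by ring, by nlinarith, ?_, ?_⟩
      · rw [abs_of_nonneg h, abs_of_nonneg (by positivity)]; linarith
      · rw [abs_of_nonneg (by positivity : 0 ≤ τ + √μ), abs_le]; constructor <;> linarith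
    · refine ⟨τ - √μ, τ + √μ, by ring, by nlinarith, ?_, ?_⟩
      · rw [abs_of_nonpos h, abs_of_nonpos (by linarith)]; linarith
      · rw [abs_of_nonpos (by linarith : τ - √μ ≤ 0), abs_le]; constructor <;> linarith
  have hab0 : a * b ≠ 0 := by rw [hmul]; exact sub_ne_zero.2 hne
  have ha : a ≠ 0 := left_ne_zero_of_mul hab0
  have hb : b ≠ 0 := right_ne_zero_of_mul hab0
  have hab' : (a : ℂ) + b = 2 * τ := by exact_mod_cast hab
  have hmul' : (a : ℂ) * b = τ ^ 2 - μ := by exact_mod_cast hmul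
  have ha1 : 1 ≤ |a| := hτ.trans hτa
  have hsq : τ ^ 2 ≤ a ^ 2 := sq_le_sq.2 hτa
  have hsqb : b ^ 2 ≤ a ^ 2 := sq_le_sq.2 hba
  have ha2 : 0 < a ^ 2 := by positivity
  have hτ2 : 0 < τ ^ 2 := by positivity
  -- first factor
  obtain ⟨u, hu, -, huw⟩ := hKs a ha (fun x => -f x) f.continuous.neg f.integrable.neg
  have huw := huw ha1
  simp only [norm_neg] at huw
  set L := ∫⁻ x : ℝ, ENNReal.ofReal ((1 + x ^ 2) ^ δ * ‖f x‖ ^ 2) with hL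
  have hLfin : L < ⊤ := aux_schwartz_fin δ f
  set U := ∫⁻ x : ℝ, ENNReal.ofReal ((1 + x ^ 2) ^ δ * ‖u x‖ ^ 2) with hU
  have hUfin : U < ⊤ := huw.trans_lt (ENNReal.mul_lt_top ENNReal.ofReal_lt_top hLfin)
  have huc : Continuous u := continuous_iff_continuousAt.2 fun x => (hu x).continuousAt
  have mu : Measurable u := huc.measurable
  -- `u` is integrable
  have hu1 : (∫⁻ x, ‖u x‖ₑ) ^ 2 ≤ ENNReal.ofReal J * U := by
    calc (∫⁻ x, ‖u x‖ₑ) ^ 2 = (∫⁻ x : ℝ, ENNReal.ofReal ((1 + x ^ 2) ^ (-δ / 2)) *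
          ENNReal.ofReal ((1 + x ^ 2) ^ (δ / 2) * ‖u x‖)) ^ 2 := by
          congr 2; ext x
          rw [← ENNReal.ofReal_mul (by positivity), ← mul_assoc, ← Real.rpow_add (by positivity),
            ← ofReal_norm]
          congr 1
          rw [show -δ / 2 + δ / 2 = 0 by ring, Real.rpow_zero, one_mul]
      _ ≤ _ := aux_cs volume (by fun_prop) (by fun_prop)
      _ = _ := by
          rw [← hJl, hU]
          congr 2 <;> ext x <;> rw [← ENNReal.ofReal_pow (by positivity)] <;> congr 1
          · rw [← Real.rpow_natCast, ← Real.rpow_mul (by positivity)]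
            congr 1; push_cast; ring
          · rw [mul_pow, ← Real.rpow_natCast ((1 + x ^ 2) ^ (δ / 2)),
              ← Real.rpow_mul (by positivity)]
            congr 2; push_cast; ring
  have hui : Integrable u := by
    refine ⟨huc.aestronglyMeasurable, ?_⟩
    rw [hasFiniteIntegral_iff_enorm]
    have h := hu1.trans_lt (ENNReal.mul_lt_top ENNReal.ofReal_lt_top hUfin)
    by_contra hcon
    rw [not_lt_top_iff.1 hcon] at h
    simp at h
  -- second factor
  obtain ⟨r, hr, hrb, -⟩ := hKs b hb u huc hui
  have hrc : Continuous r := continuous_iff_continuousAt.2 fun x => (hr x).continuousAt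
  have hrd : deriv r = fun x => (b : ℂ) * r x + u x := funext fun x => (hr x).deriv
  have hr2 : ∀ x, HasDerivAt (deriv r) ((b : ℂ) * (b * r x + u x) + (a * u x + -f x)) x := by
    intro x
    rw [hrd]
    exact ((hr x).const_mul (b : ℂ)).add (hu x)
  have hcd : ContDiff ℝ 2 r := by
    have h1 : ContDiff ℝ 1 (deriv r) := by
      rw [contDiff_one_iff_deriv]
      refine ⟨fun x => (hr2 x).differentiableAt, ?_⟩
      rw [funext fun x => (hr2 x).deriv]
      have := f.continuous
      fun_prop
    rw [show (2 : WithTop ℕ∞) = 1 + 1 by norm_num, contDiff_succ_iff_deriv]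
    exact ⟨fun x => (hr x).differentiableAt, by simp, h1⟩
  have hode : ∀ x : ℝ, -(deriv (deriv r) x) + (2 * (τ : ℂ)) * deriv r x +
      ((μ : ℂ) - (τ : ℂ) ^ 2) * r x = f x := by
    intro x
    rw [(hr2 x).deriv, hrd]
    linear_combination (-(b * r x + u x)) * hab' + r x * hmul'
  -- weighted bound on `r`
  have hrw : ∫⁻ x : ℝ, ENNReal.ofReal ((1 + x ^ 2) ^ (-δ) * ‖r x‖ ^ 2) ≤
      ENNReal.ofReal (J ^ 2 * (K / a ^ 2)) * L := by
    calc ∫⁻ x : ℝ, ENNReal.ofReal ((1 + x ^ 2) ^ (-δ) * ‖r x‖ ^ 2)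
        ≤ ∫⁻ x : ℝ, ENNReal.ofReal ((1 + x ^ 2) ^ (-δ)) * (ENNReal.ofReal J * U) := by
          apply lintegral_mono
          intro x
          simp only
          rw [ENNReal.ofReal_mul (by positivity), ENNReal.ofReal_pow (norm_nonneg _), ofReal_norm]
          gcongr
          exact (pow_le_pow_left₀ zero_le (hrb x) 2).trans hu1
      _ = ENNReal.ofReal J * (ENNReal.ofReal J * U) := by
          rw [lintegral_mul_const _ (by fun_prop), hJl]
      _ ≤ ENNReal.ofReal J * (ENNReal.ofReal J * (ENNReal.ofReal (K / a ^ 2) * L)) := by gcongr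
      _ = _ := by
          rw [← mul_assoc, ← mul_assoc, ← ENNReal.ofReal_mul hJ0, ← ENNReal.ofReal_mul (by positivity)]
          congr 2; ring
  have hrfin : ∫⁻ x : ℝ, ENNReal.ofReal ((1 + x ^ 2) ^ (-δ) * ‖r x‖ ^ 2) < ⊤ :=
    hrw.trans_lt (ENNReal.mul_lt_top ENNReal.ofReal_lt_top hLfin)
  refine ⟨r, hcd, hode, ?_, ?_, ?_⟩
  · refine hrw.trans ?_
    gcongr
    calc J ^ 2 * (K / a ^ 2) ≤ J ^ 2 * (K / τ ^ 2) := by gcongr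
      _ = (J ^ 2 * K) / τ ^ 2 := by ring
      _ ≤ _ := by
        gcongr
        refine le_trans ?_ hAC
        rw [hA]; nlinarith [mul_nonneg (sq_nonneg J) hK.le]
  · rw [hrd]
    calc ∫⁻ x : ℝ, ENNReal.ofReal ((1 + x ^ 2) ^ (-δ) * ‖(b : ℂ) * r x + u x‖ ^ 2)
        ≤ ∫⁻ x : ℝ, (ENNReal.ofReal (2 * b ^ 2) *
            ENNReal.ofReal ((1 + x ^ 2) ^ (-δ) * ‖r x‖ ^ 2) +
            2 * ENNReal.ofReal ((1 + x ^ 2) ^ δ * ‖u x‖ ^ 2)) := by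
          apply lintegral_mono
          intro x
          refine (aux_sq _ (by positivity) _ _).trans (add_le_add (le_of_eq ?_) ?_)
          · rw [show (2 : ENNReal) = ENNReal.ofReal 2 by simp,
              ← ENNReal.ofReal_mul (by positivity), ← ENNReal.ofReal_mul (by positivity)]
            congr 1
            rw [norm_mul, mul_pow, Complex.norm_real, Real.norm_eq_abs, sq_abs]; ring
          · gcongr
            · nlinarith [sq_nonneg x]
            · linarith
      _ = ENNReal.ofReal (2 * b ^ 2) *
            (∫⁻ x : ℝ, ENNReal.ofReal ((1 + x ^ 2) ^ (-δ) * ‖r x‖ ^ 2)) + 2 * U := by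
          have mr : Measurable r := hrc.measurable
          rw [lintegral_add_left (by fun_prop), lintegral_const_mul' _ _ ENNReal.ofReal_ne_top,
            lintegral_const_mul' _ _ (by simp)]
      _ ≤ ENNReal.ofReal (2 * b ^ 2) * (ENNReal.ofReal (J ^ 2 * (K / a ^ 2)) * L) +
            ENNReal.ofReal 2 * (ENNReal.ofReal (K / a ^ 2) * L) := by
          rw [show (2 : ENNReal) = ENNReal.ofReal 2 by simp]
          gcongr
      _ = ENNReal.ofReal (2 * b ^ 2 * (J ^ 2 * (K / a ^ 2)) + 2 * (K / a ^ 2)) * L := by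
          rw [ENNReal.ofReal_add (by positivity) (by positivity),
            ENNReal.ofReal_mul (p := 2 * b ^ 2) (by positivity),
            ENNReal.ofReal_mul (p := 2) (q := K / a ^ 2) (by positivity)]
          ring
      _ ≤ _ := by
          gcongr
          refine le_trans ?_ hAC
          have h1 : b ^ 2 / a ^ 2 ≤ 1 := by rw [div_le_one ha2]; exact hsqb
          have h2 : K / a ^ 2 ≤ K := by
            apply div_le_self hK.le
            rw [← sq_abs]; nlinarith
          calc 2 * b ^ 2 * (J ^ 2 * (K / a ^ 2)) + 2 * (K / a ^ 2)
              = 2 * K * J ^ 2 * (b ^ 2 / a ^ 2) + 2 * (K / a ^ 2) := by ring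
            _ ≤ 2 * K * J ^ 2 * 1 + 2 * K := by gcongr
            _ = A := by rw [hA]; ring
  · intro r' hr' hode' hfin'
    have d1 : ∀ x, HasDerivAt r' (deriv r' x) x := fun x =>
      ((hr'.differentiable (by norm_num)) x).hasDerivAt
    have hr'1 : ContDiff ℝ 1 (deriv r') := by
      rw [show (2 : WithTop ℕ∞) = 1 + 1 by norm_num, contDiff_succ_iff_deriv] at hr'
      exact hr'.2.2
    have d2 : ∀ x, HasDerivAt (deriv r') (deriv (deriv r') x) x := fun x =>
      ((hr'1.differentiable (by norm_num)) x).hasDerivAt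
    have hzero := aux_unique δ hδ0 a b ha hb (fun x => r' x - r x)
      (fun x => deriv r' x - deriv r x)
      (fun x => (d1 x).sub (hr x).differentiableAt.hasDerivAt)
      (fun x => ((d2 x).sub (hr2 x).differentiableAt.hasDerivAt).congr_deriv (by
        have e1 := hode' x
        have e2 := hode x
        rw [hab', hmul']
        linear_combination e2 - e1)) ?_
    · funext x
      exact sub_eq_zero.1 (hzero x)
    · have mr' : Measurable r' := hr'.continuous.measurable
      calc ∫⁻ x : ℝ, ENNReal.ofReal ((1 + x ^ 2) ^ (-δ) * ‖r' x - r x‖ ^ 2)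
          ≤ ∫⁻ x : ℝ, (2 * ENNReal.ofReal ((1 + x ^ 2) ^ (-δ) * ‖r' x‖ ^ 2) +
              2 * ENNReal.ofReal ((1 + x ^ 2) ^ (-δ) * ‖r x‖ ^ 2)) := by
            apply lintegral_mono
            intro x
            have := aux_sq ((1 + x ^ 2) ^ (-δ)) (by positivity) (r' x) (-r x)
            rw [norm_neg, ← sub_eq_add_neg] at this
            exact this
        _ = 2 * (∫⁻ x : ℝ, ENNReal.ofReal ((1 + x ^ 2) ^ (-δ) * ‖r' x‖ ^ 2)) +
              2 * ∫⁻ x : ℝ, ENNReal.ofReal ((1 + x ^ 2) ^ (-δ) * ‖r x‖ ^ 2) := by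
            rw [lintegral_add_left (by fun_prop), lintegral_const_mul' _ _ (by simp),
              lintegral_const_mul' _ _ (by simp)]
        _ < ⊤ := ENNReal.add_lt_top.2 ⟨ENNReal.mul_lt_top (by simp) hfin',
            ENNReal.mul_lt_top (by simp) hrfin⟩
end

section
/- Let n ≥ 1, let a < b be real numbers, and let V ⊆ ℝⁿ be an open neighborhood of the segment S = {(t,0,…,0) : t ∈ (a,b)}. Suppose F : V → ℝⁿ is continuously differentiable, the restriction of F to S is injective, and for every t ∈ (a,b) the Fréchet derivative DF(t,0) is an invertible linear map. Then for any closed subinterval [a₀,b₀] ⊆ (a,b) there exists an open set U with {(t,0,…,0) : t ∈ [a₀,b₀]} ⊆ U ⊆ V such that F restricted to U is injective, F(U) is open in ℝⁿ, and the inverse map F(U) → U is continuously differentiable; that is, F is a C¹ diffeomorphism from U onto F(U). -/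
/-- The point `(t, 0, …, 0)` of `ℝⁿ`. -/
def segPt (n : ℕ) (t : ℝ) : Fin n → ℝ := fun i => if (i : ℕ) = 0 then t else 0

/-- If `F` is a `C¹` map on a neighborhood `V` of the segment
`S = {(t,0,…,0) : t ∈ (a,b)}` in `ℝⁿ`, injective on `S`, and `DF(t,0)` is invertible
for every `t ∈ (a,b)`, then for any closed subinterval `[a₀,b₀] ⊆ (a,b)` the map `F`
is a `C¹` diffeomorphism from some open neighborhood `U` of `{(t,0,…,0) : t ∈ [a₀,b₀]}`
(with `U ⊆ V`) onto its open image. -/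
theorem stmt3 (n : ℕ) (hn : 1 ≤ n) (a b : ℝ) (hab : a < b)
    (V : Set (Fin n → ℝ)) (hV : IsOpen V) (hSV : segPt n '' Set.Ioo a b ⊆ V)
    (F : (Fin n → ℝ) → (Fin n → ℝ)) (hF : ContDiffOn ℝ 1 F V)
    (hinj : Set.InjOn F (segPt n '' Set.Ioo a b))
    (hder : ∀ t ∈ Set.Ioo a b, Function.Bijective ⇑(fderiv ℝ F (segPt n t)))
    (a₀ b₀ : ℝ) (ha₀ : a < a₀) (hab₀ : a₀ ≤ b₀) (hb₀ : b₀ < b) :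
    ∃ U : Set (Fin n → ℝ), IsOpen U ∧ segPt n '' Set.Icc a₀ b₀ ⊆ U ∧ U ⊆ V ∧
      Set.InjOn F U ∧ IsOpen (F '' U) ∧
      ∃ G : (Fin n → ℝ) → (Fin n → ℝ), ContDiffOn ℝ 1 G (F '' U) ∧
        (∀ x ∈ U, G (F x) = x) ∧ ∀ y ∈ F '' U, F (G y) = y := by
  have hK : IsCompact (segPt n '' Set.Icc a₀ b₀) := by
    refine isCompact_Icc.image ?_
    unfold segPt
    refine continuous_pi fun i => ?_
    by_cases h : (i : ℕ) = 0
    · simpa [h] using continuous_id'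
    · simpa [h] using continuous_const
  have hsub : segPt n '' Set.Icc a₀ b₀ ⊆ segPt n '' Set.Ioo a b :=
    Set.image_mono (Set.Icc_subset_Ioo ha₀ hb₀)
  have hCD : ∀ x ∈ V, ContDiffAt ℝ 1 F x := fun x hx => hF.contDiffAt (hV.mem_nhds hx)
  set R : Set ((Fin n → ℝ) →L[ℝ] (Fin n → ℝ)) :=
    Set.range ((↑) : ((Fin n → ℝ) ≃L[ℝ] (Fin n → ℝ)) → _) with hR
  have hRo : IsOpen R := ContinuousLinearEquiv.isOpen
  have hWo : IsOpen (V ∩ fderiv ℝ F ⁻¹' R) :=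
    (hF.continuousOn_fderiv_of_isOpen hV le_rfl).isOpen_inter_preimage hV hRo
  have hstrict : ∀ x ∈ V ∩ fderiv ℝ F ⁻¹' R, ∃ e : (Fin n → ℝ) ≃L[ℝ] (Fin n → ℝ),
      HasStrictFDerivAt F (e : (Fin n → ℝ) →L[ℝ] (Fin n → ℝ)) x := by
    rintro x ⟨hx, e, he⟩
    refine ⟨e, ?_⟩
    rw [he]
    exact (hCD x hx).hasStrictFDerivAt one_ne_zero
  have hKW : segPt n '' Set.Icc a₀ b₀ ⊆ V ∩ fderiv ℝ F ⁻¹' R := by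
    intro x hx
    refine ⟨hSV (hsub hx), ?_⟩
    obtain ⟨t, ht, rfl⟩ := hsub hx
    refine ⟨(LinearEquiv.ofBijective (fderiv ℝ F (segPt n t)).toLinearMap
      (hder t ht)).toContinuousLinearEquiv, ?_⟩
    ext1 v
    rfl
  obtain ⟨T, hTo, hKT, hTinj⟩ := (hinj.mono hsub).exists_isOpen_superset hK
    (fun x hx => (hCD x (hKW hx).1).continuousAt) (fun x hx => by
      obtain ⟨e, he⟩ := hstrict x (hKW hx)
      exact ⟨he.toOpenPartialHomeomorph F |>.source,
        (he.toOpenPartialHomeomorph F).open_source.mem_nhds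
          he.mem_toOpenPartialHomeomorph_source,
        (he.toOpenPartialHomeomorph F).injOn⟩)
  set U := T ∩ (V ∩ fderiv ℝ F ⁻¹' R) with hU
  have hUo : IsOpen U := hTo.inter hWo
  have hUinj : Set.InjOn F U := hTinj.mono Set.inter_subset_left
  have hG : ∀ x ∈ U, Function.invFunOn F U (F x) = x := fun x hx =>
    hUinj.leftInvOn_invFunOn hx
  refine ⟨U, hUo, Set.subset_inter hKT hKW, fun x hx => hx.2.1, hUinj, ?_,
    Function.invFunOn F U, ?_, hG, ?_⟩
  · rw [isOpen_iff_mem_nhds]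
    rintro _ ⟨x, hx, rfl⟩
    obtain ⟨e, he⟩ := hstrict x hx.2
    rw [← he.map_nhds_eq_of_equiv]
    exact Filter.image_mem_map (hUo.mem_nhds hx)
  · rintro _ ⟨x, hx, rfl⟩
    obtain ⟨e, he⟩ := hstrict x hx.2
    have h1 := (hCD x hx.2.1).to_localInverse he.hasFDerivAt one_ne_zero
    refine (h1.congr_of_eventuallyEq ?_).contDiffWithinAt
    have h2 : ∀ᶠ y in nhds (F x), he.localInverse F e x y ∈ U := by
      refine he.localInverse_continuousAt.eventually_mem ?_
      rw [he.localInverse_apply_image]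
      exact hUo.mem_nhds hx
    filter_upwards [h2, he.eventually_right_inverse] with y hy hy2
    have := hG _ hy
    rw [hy2] at this
    exact this
  · rintro _ ⟨x, hx, rfl⟩
    rw [hG x hx]
end

section
/- Let d ≥ 1, let O ⊆ ℝ^d be open, and let F : ℝ × ℝ^d → ℂ be continuous with compact support. Define the partial Fourier transform F̂(λ, y) = ∫_ℝ e^{−i λ x₁} F(x₁, y) dx₁. Assume: (i) (injectivity of the local segment transform on O) for every continuous compactly supported g : ℝ^d → ℂ, if ∫_0^L g(x + tθ) dt = 0 for every x ∈ ℝ^d, every unit vector θ ∈ ℝ^d, and every L > 0 such that the segment {x + tθ : t ∈ [0,L]} is contained in O, then g vanishes identically on O; and (ii) for every λ ∈ ℝ and every such segment, ∫_0^L e^{−2λ t} F̂(2λ, x + tθ) dt = 0. Then F(x₁, y) = 0 for all x₁ ∈ ℝ and all y ∈ O. -/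
open MeasureTheory

/-- The partial Fourier transform in the first variable of a function on `ℝ × ℝ^d`. -/
noncomputable def pFourier (d : ℕ) (F : ℝ × EuclideanSpace ℝ (Fin d) → ℂ)
    (lam : ℝ) (y : EuclideanSpace ℝ (Fin d)) : ℂ :=
  ∫ x₁ : ℝ, Complex.exp (-Complex.I * (lam : ℂ) * (x₁ : ℂ)) * F (x₁, y)

/-- Differentiating an exponential integral repeatedly in the parameter. -/
lemma moments_of_exp {α : Type*} [MeasurableSpace α] (μ : Measure α) [IsFiniteMeasure μ]
    (φ f : α → ℂ) (hφ : AEStronglyMeasurable φ μ) (hf : AEStronglyMeasurable f μ)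
    (C D : ℝ) (hC : ∀ᵐ a ∂μ, ‖φ a‖ ≤ C) (hD : ∀ᵐ a ∂μ, ‖f a‖ ≤ D)
    (h0 : ∀ s : ℝ, ∫ a, Complex.exp ((s : ℂ) * φ a) * f a ∂μ = 0) (k : ℕ) :
    ∀ s : ℝ, ∫ a, φ a ^ k * (Complex.exp ((s : ℂ) * φ a) * f a) ∂μ = 0 := by
  have hmeas : ∀ (k : ℕ) (s : ℝ), AEStronglyMeasurable
      (fun a => φ a ^ k * (Complex.exp ((s : ℂ) * φ a) * f a)) μ := by
    intro k s
    exact (hφ.pow k).mul ((Complex.continuous_exp.comp_aestronglyMeasurable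
      (hφ.const_mul (s : ℂ))).mul hf)
  have hbd : ∀ (k : ℕ) (s M : ℝ), |s| ≤ M → ∀ᵐ a ∂μ,
      ‖φ a ^ k * (Complex.exp ((s : ℂ) * φ a) * f a)‖ ≤ C ^ k * (Real.exp (M * C) * D) := by
    intro k s M hs
    filter_upwards [hC, hD] with a h1 h2
    have hC0 : 0 ≤ C := (norm_nonneg _).trans h1
    rw [norm_mul, norm_mul, norm_pow]
    have h3 : ‖Complex.exp ((s : ℂ) * φ a)‖ ≤ Real.exp (M * C) := by
      refine (Complex.norm_exp_le_exp_norm _).trans (Real.exp_le_exp.2 ?_)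
      rw [norm_mul, Complex.norm_real, Real.norm_eq_abs]
      gcongr
      exact (abs_nonneg _).trans hs
    gcongr
  induction k with
  | zero => intro s; simpa using h0 s
  | succ k ih =>
    intro s
    have key := (hasDerivAt_integral_of_dominated_loc_of_deriv_le (μ := μ) (𝕜 := ℝ)
      (F := fun (s : ℝ) a => φ a ^ k * (Complex.exp ((s : ℂ) * φ a) * f a))
      (F' := fun (s : ℝ) a => φ a ^ (k+1) * (Complex.exp ((s : ℂ) * φ a) * f a))
      (x₀ := s) (s := Metric.ball s 1)
      (bound := fun _ => C ^ (k+1) * (Real.exp ((|s| + 1) * C) * D))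
      (Metric.ball_mem_nhds s one_pos)
      (Filter.Eventually.of_forall fun s => hmeas k s)
      (Integrable.of_bound (hmeas k s) _ (hbd k s _ le_rfl))
      (hmeas (k+1) s) ?_ (integrable_const _) ?_).2
    · have h1 : (fun s : ℝ => ∫ a, φ a ^ k * (Complex.exp ((s : ℂ) * φ a) * f a) ∂μ)
          = fun _ => 0 := funext ih
      rw [h1] at key
      exact key.unique (hasDerivAt_const s (0:ℂ))
    · filter_upwards [hC, hD] with a h1 h2
      intro x hx
      have hC0 : 0 ≤ C := (norm_nonneg _).trans h1
      have hxM : |x| ≤ |s| + 1 := by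
        rw [Metric.mem_ball, Real.dist_eq] at hx
        have := abs_sub_abs_le_abs_sub x s
        linarith
      rw [norm_mul, norm_mul, norm_pow]
      have h3 : ‖Complex.exp ((x : ℂ) * φ a)‖ ≤ Real.exp ((|s| + 1) * C) := by
        refine (Complex.norm_exp_le_exp_norm _).trans (Real.exp_le_exp.2 ?_)
        rw [norm_mul, Complex.norm_real, Real.norm_eq_abs]
        gcongr
      gcongr
    · refine Filter.Eventually.of_forall fun a x _ => ?_
      have h1 : HasDerivAt (fun x : ℝ => (x : ℂ) * φ a) (φ a) x := by
        simpa using (Complex.ofRealCLM.hasDerivAt (x := x)).mul_const (φ a)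
      have h2 := ((h1.cexp).mul_const (f a)).const_mul (φ a ^ k)
      refine HasDerivAt.congr_deriv h2 ?_
      ring

/-- A continuous function supported in `[-R, R]` with vanishing moments is zero. -/
lemma eq_zero_of_moments (h : ℝ → ℂ) (hc : Continuous h) (R : ℝ)
    (hs : ∀ x, x ∉ Set.Icc (-R) R → h x = 0)
    (hm : ∀ k : ℕ, ∫ x in Set.Icc (-R) R, (x : ℂ) ^ k * h x = 0) : h = 0 := by
  have hI : ∀ g : ℝ → ℂ, Continuous g → IntegrableOn g (Set.Icc (-R) R) := fun g hg =>
    hg.continuousOn.integrableOn_compact isCompact_Icc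
  have hpoly : ∀ p : Polynomial ℝ, ∫ x in Set.Icc (-R) R, ((p.eval x : ℝ) : ℂ) * h x = 0 := by
    intro p
    have : ∀ x : ℝ, ((p.eval x : ℝ) : ℂ) * h x
        = ∑ i ∈ Finset.range (p.natDegree + 1), (p.coeff i : ℂ) * ((x : ℂ) ^ i * h x) := by
      intro x
      rw [Polynomial.eval_eq_sum_range]
      push_cast
      rw [Finset.sum_mul]
      refine Finset.sum_congr rfl fun i _ => by ring
    simp_rw [this]
    rw [integral_finsetSum]
    · refine Finset.sum_eq_zero fun i _ => ?_
      rw [integral_const_mul, hm i, mul_zero]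
    · intro i _
      exact hI _ (by fun_prop)
  have hg : ∀ g : ℝ → ℝ, Continuous g → ∫ x, g x • h x = 0 := by
    intro g hgc
    rw [← setIntegral_eq_integral_of_forall_compl_eq_zero (s := Set.Icc (-R) R)
      (fun x hx => by rw [hs x hx, smul_zero])]
    set N := ∫ x in Set.Icc (-R) R, ‖h x‖ with hN
    have hN0 : 0 ≤ N := integral_nonneg fun _ => norm_nonneg _
    rw [← norm_le_zero_iff]
    refine le_of_forall_pos_le_add fun ε hε => ?_
    obtain ⟨p, hp⟩ := exists_polynomial_near_of_continuousOn (-R) R g hgc.continuousOn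
      (ε / (N + 1)) (by positivity)
    have e : ∫ x in Set.Icc (-R) R, g x • h x
        = ∫ x in Set.Icc (-R) R, (((g x - p.eval x : ℝ)) : ℂ) * h x := by
      rw [← sub_zero (∫ x in Set.Icc (-R) R, g x • h x), ← hpoly p, ← integral_sub]
      · refine integral_congr_ae (Filter.Eventually.of_forall fun x => ?_)
        simp only [Complex.real_smul]
        push_cast
        ring
      · exact hI _ (by fun_prop)
      · exact hI _ (by have := p.continuous; fun_prop)
    rw [e, zero_add]
    have hle : ‖∫ x in Set.Icc (-R) R, (((g x - p.eval x : ℝ)) : ℂ) * h x‖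
        ≤ ∫ x in Set.Icc (-R) R, ε / (N + 1) * ‖h x‖ := by
      refine norm_integral_le_of_norm_le ?_ ?_
      · exact (hI h hc).norm.const_mul _
      · refine (ae_restrict_iff' measurableSet_Icc).2 (Filter.Eventually.of_forall fun x hx => ?_)
        rw [norm_mul, Complex.norm_real, Real.norm_eq_abs, abs_sub_comm]
        gcongr
        exact (hp x hx).le
    refine hle.trans ?_
    rw [integral_const_mul, ← hN, div_mul_eq_mul_div, div_le_iff₀ (by positivity)]
    nlinarith
  have hae : ∀ᵐ x, h x = 0 :=
    ae_eq_zero_of_integral_contDiff_smul_eq_zero hc.locallyIntegrable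
      fun g hg1 _ => hg g hg1.continuous
  exact (hc.ae_eq_iff_eq volume continuous_zero).1 hae

/-- Euclidean analytic core of the local uniqueness theorem: if the local segment
transform is injective on the open set `O ⊆ ℝ^d`, and all attenuated segment integrals
`∫_0^L e^{−2λt} F̂(2λ, x + tθ) dt` over segments contained in `O` vanish for every
`λ ∈ ℝ`, then the continuous compactly supported function `F` vanishes on `ℝ × O`. -/
theorem stmt9 (d : ℕ) (hd : 1 ≤ d) (O : Set (EuclideanSpace ℝ (Fin d))) (hO : IsOpen O)
    (F : ℝ × EuclideanSpace ℝ (Fin d) → ℂ) (hF : Continuous F) (hFc : HasCompactSupport F)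
    (hinj : ∀ g : EuclideanSpace ℝ (Fin d) → ℂ, Continuous g → HasCompactSupport g →
      (∀ (x θ : EuclideanSpace ℝ (Fin d)) (L : ℝ), ‖θ‖ = 1 → 0 < L →
        (∀ t ∈ Set.Icc (0 : ℝ) L, x + t • θ ∈ O) →
        (∫ t in (0 : ℝ)..L, g (x + t • θ)) = 0) →
      ∀ y ∈ O, g y = 0)
    (hvan : ∀ (lam : ℝ) (x θ : EuclideanSpace ℝ (Fin d)) (L : ℝ), ‖θ‖ = 1 → 0 < L →
      (∀ t ∈ Set.Icc (0 : ℝ) L, x + t • θ ∈ O) →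
      (∫ t in (0 : ℝ)..L, ((Real.exp (-2 * lam * t) : ℝ) : ℂ) *
        pFourier d F (2 * lam) (x + t • θ)) = 0) :
    ∀ x₁ : ℝ, ∀ y ∈ O, F (x₁, y) = 0 := by
  obtain ⟨R, hR⟩ : ∃ R : ℝ, ∀ x₁ y, x₁ ∉ Set.Icc (-R) R → F (x₁, y) = 0 := by
    obtain ⟨R, hR⟩ := (hFc.isCompact.image continuous_fst).isBounded.subset_closedBall 0
    refine ⟨R, fun x₁ y hx => ?_⟩
    by_contra hne
    have := hR ⟨(x₁, y), subset_tsupport F hne, rfl⟩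
    rw [Real.closedBall_eq_Icc] at this
    exact hx (by simpa using this)
  obtain ⟨D, hD⟩ := hFc.exists_bound_of_continuous hF
  set m : ℕ → EuclideanSpace ℝ (Fin d) → ℂ :=
    fun k y => ∫ x₁ in Set.Icc (-R) R, (x₁ : ℂ) ^ k * F (x₁, y) with hm
  have hmc : ∀ k, Continuous (m k) := fun k =>
    continuous_parametric_integral_of_continuous
      (f := fun y (x₁ : ℝ) => (x₁ : ℂ) ^ k * F (x₁, y))
      (by simp only [Function.uncurry_def]; fun_prop) isCompact_Icc
  have hms : ∀ k, HasCompactSupport (m k) := by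
    intro k
    refine HasCompactSupport.intro (hFc.isCompact.image continuous_snd) fun y hy => ?_
    have : ∀ x₁, F (x₁, y) = 0 := fun x₁ => by
      by_contra hne
      exact hy ⟨(x₁, y), subset_tsupport F hne, rfl⟩
    simp [hm, this]
  have hmz : ∀ k, ∀ y ∈ O, m k y = 0 := by
    intro k
    induction k using Nat.strong_induction_on with
    | _ k ih =>
    refine hinj (m k) (hmc k) (hms k) fun x θ L hθ hL hseg => ?_
    let ν : Measure ℝ := volume.restrict (Set.Ioc 0 L)
    let ρ : Measure ℝ := volume.restrict (Set.Icc (-R) R)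
    let φ : ℝ × ℝ → ℂ := fun q => -(Complex.I * (q.2 : ℂ) + (q.1 : ℂ))
    let f : ℝ × ℝ → ℂ := fun q => F (q.2, x + q.1 • θ)
    have hφc : Continuous φ := by fun_prop
    have hfc : Continuous f := by fun_prop
    have hνρ : ν.prod ρ = volume.restrict (Set.Ioc 0 L ×ˢ Set.Icc (-R) R) := by
      rw [Measure.prod_restrict]; rfl
    have hφb : ∀ᵐ q ∂(ν.prod ρ), ‖φ q‖ ≤ |R| + |L| := by
      rw [hνρ]
      refine (ae_restrict_iff' (measurableSet_Ioc.prod measurableSet_Icc)).2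
        (Filter.Eventually.of_forall ?_)
      rintro ⟨t, s⟩ ⟨⟨h1, h2⟩, h3, h4⟩
      simp only [φ, norm_neg]
      refine (norm_add_le _ _).trans ?_
      rw [norm_mul, Complex.norm_I, one_mul, Complex.norm_real, Complex.norm_real,
        Real.norm_eq_abs, Real.norm_eq_abs]
      dsimp only at h1 h2 h3 h4
      have a1 : |s| ≤ |R| := (abs_le.2 ⟨h3, h4⟩).trans (le_abs_self R)
      have a2 : |t| ≤ |L| := by rw [abs_of_pos h1, abs_of_pos hL]; exact h2
      exact add_le_add a1 a2
    have hint : ∀ g : ℝ × ℝ → ℂ, Continuous g → Integrable g (ν.prod ρ) := by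
      intro g hg
      rw [hνρ]
      exact (hg.continuousOn.integrableOn_compact (isCompact_Icc.prod isCompact_Icc)).mono_set
        (Set.prod_mono Set.Ioc_subset_Icc_self subset_rfl)
    have h0 : ∀ s : ℝ, ∫ q, Complex.exp ((s : ℂ) * φ q) * f q ∂(ν.prod ρ) = 0 := by
      intro s
      rw [integral_prod _ (hint _ (by fun_prop))]
      have hv := hvan (s / 2) x θ L hθ hL hseg
      rw [intervalIntegral.integral_of_le hL.le] at hv
      rw [← hv]
      refine integral_congr_ae (Filter.Eventually.of_forall fun t => ?_)
      simp only [pFourier, φ, f]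
      rw [← setIntegral_eq_integral_of_forall_compl_eq_zero (s := Set.Icc (-R) R)
        (f := fun x₁ : ℝ => Complex.exp (-Complex.I * ((2 * (s / 2) : ℝ) : ℂ) * (x₁ : ℂ))
          * F (x₁, x + t • θ))
        (fun x₁ hx => by rw [hR x₁ _ hx, mul_zero]), ← integral_const_mul]
      refine integral_congr_ae (Filter.Eventually.of_forall fun x₁ => ?_)
      simp only
      rw [← mul_assoc, Complex.ofReal_exp, ← Complex.exp_add]
      congr 2
      push_cast
      ring
    have hk := moments_of_exp (ν.prod ρ) φ f hφc.aestronglyMeasurable hfc.aestronglyMeasurable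
      (|R| + |L|) D hφb (Filter.Eventually.of_forall fun q => hD _) h0 k 0
    rw [integral_prod _ (hint _ (by fun_prop))] at hk
    have hinner : ∀ t ∈ Set.Ioc 0 L,
        ∫ s, φ (t, s) ^ k * (Complex.exp (((0 : ℝ) : ℂ) * φ (t, s)) * f (t, s)) ∂ρ
          = ((-1) ^ k * Complex.I ^ k) * m k (x + t • θ) := by
      intro t ht
      have hy : x + t • θ ∈ O := hseg t ⟨ht.1.le, ht.2⟩
      have e : ∀ s : ℝ, φ (t, s) ^ k * (Complex.exp (((0 : ℝ) : ℂ) * φ (t, s)) * f (t, s))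
          = ∑ j ∈ Finset.range (k + 1), ((-1) ^ k * Complex.I ^ j * (t : ℂ) ^ (k - j)
            * (k.choose j : ℂ)) * ((s : ℂ) ^ j * F (s, x + t • θ)) := by
        intro s
        simp only [φ, f]
        rw [Complex.ofReal_zero, zero_mul, Complex.exp_zero, one_mul, neg_pow, add_pow,
          Finset.mul_sum, Finset.sum_mul]
        refine Finset.sum_congr rfl fun j _ => ?_
        rw [mul_pow]
        ring
      simp_rw [e]
      rw [integral_finsetSum]
      · simp_rw [integral_const_mul]
        rw [Finset.sum_range_succ, Finset.sum_eq_zero, zero_add]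
        · simp [hm, ρ]
        · intro j hj
          have := ih j (Finset.mem_range.1 hj) _ hy
          simp only [hm] at this
          simp only [ρ]
          rw [this, mul_zero]
      · intro j _
        have hcont : Continuous fun s : ℝ => ((-1) ^ k * Complex.I ^ j * (t : ℂ) ^ (k - j)
            * (k.choose j : ℂ)) * ((s : ℂ) ^ j * F (s, x + t • θ)) := by fun_prop
        exact hcont.continuousOn.integrableOn_compact isCompact_Icc
    rw [setIntegral_congr_fun measurableSet_Ioc hinner, integral_const_mul] at hk
    rw [intervalIntegral.integral_of_le hL.le]
    refine (mul_eq_zero.1 hk).resolve_left ?_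
    exact mul_ne_zero (pow_ne_zero _ (by norm_num)) (pow_ne_zero _ Complex.I_ne_zero)
  intro x₁ y hy
  have := eq_zero_of_moments (fun s => F (s, y)) (by fun_prop) R (fun s hs => hR s y hs)
    (fun k => hmz k y hy)
  exact congrFun this x₁
end

section
/- Let d ≥ 1, let I ⊆ ℝ be an interval, and let B, C, F : I → M_d(ℝ) be continuous matrix-valued maps with C(t) and F(t) symmetric for every t ∈ I. Suppose H : I → M_d(ℂ) is continuously differentiable, H(t) is complex symmetric with Im H(t) positive definite for every t ∈ I, and H satisfies the matrix Riccati equation H′(t) + B(t) H(t) + H(t) B(t)ᵀ + H(t) C(t) H(t) = F(t) on I. Then for all t₀, t ∈ I: det Im H(t) = det Im H(t₀) · exp( −2 ∫_{t₀}^{t} tr( B(s) + C(s) · Re H(s) ) ds ). -/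
open MeasureTheory Matrix

theorem jacobi_aux {d : ℕ} (A : ℝ → Matrix (Fin d) (Fin d) ℝ) (A' : Matrix (Fin d) (Fin d) ℝ)
    (I : Set ℝ) (t : ℝ)
    (h : ∀ i j, HasDerivWithinAt (fun s => A s i j) (A' i j) I t) :
    HasDerivWithinAt (fun s => (A s).det) (((A t).adjugate * A').trace) I t := by
  have key : HasDerivWithinAt (fun s => ∑ σ : Equiv.Perm (Fin d),
      ((Equiv.Perm.sign σ : ℤ) : ℝ) * ∏ i, A s (σ i) i)
      (∑ σ : Equiv.Perm (Fin d), ((Equiv.Perm.sign σ : ℤ) : ℝ) *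
        ∑ i, (∏ j ∈ Finset.univ.erase i, A t (σ j) j) • A' (σ i) i) I t := by
    refine HasDerivWithinAt.fun_sum fun σ _ => ?_
    refine HasDerivWithinAt.const_mul _ ?_
    exact HasDerivWithinAt.fun_finsetProd fun i _ => h (σ i) i
  have e1 : (fun s => (A s).det) = (fun s => ∑ σ : Equiv.Perm (Fin d),
      ((Equiv.Perm.sign σ : ℤ) : ℝ) * ∏ i, A s (σ i) i) := by
    funext s
    rw [Matrix.det_apply']
  have e2 : ((A t).adjugate * A').trace = ∑ σ : Equiv.Perm (Fin d),
      ((Equiv.Perm.sign σ : ℤ) : ℝ) *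
        ∑ i, (∏ j ∈ Finset.univ.erase i, A t (σ j) j) • A' (σ i) i := by
    simp only [Finset.mul_sum]
    rw [Finset.sum_comm, Matrix.trace]
    refine Finset.sum_congr rfl fun i _ => ?_
    have : ((A t).adjugate * A').diag i = ((A t).updateCol i (fun k => A' k i)).det := by
      rw [← Matrix.cramer_apply, Matrix.cramer_eq_adjugate_mulVec]
      rfl
    rw [this, Matrix.det_apply']
    refine Finset.sum_congr rfl fun σ _ => ?_
    rw [← Finset.prod_erase_mul Finset.univ _ (Finset.mem_univ i)]
    congr 1
    rw [smul_eq_mul]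
    congr 1
    · refine Finset.prod_congr rfl fun j hj => ?_
      rw [Matrix.updateCol_ne (Finset.ne_of_mem_erase hj)]
    · simp
  rw [e1, e2]
  exact key

theorem im_mul_aux {d : ℕ} (M N : Matrix (Fin d) (Fin d) ℂ) :
    (M * N).map Complex.im = M.map Complex.re * N.map Complex.im
      + M.map Complex.im * N.map Complex.re := by
  ext i j
  simp [Matrix.mul_apply, Finset.sum_add_distrib]

theorem re_mul_aux {d : ℕ} (M N : Matrix (Fin d) (Fin d) ℂ) :
    (M * N).map Complex.re = M.map Complex.re * N.map Complex.re
      - M.map Complex.im * N.map Complex.im := by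
  ext i j
  simp [Matrix.mul_apply, Finset.sum_sub_distrib]

theorem trace_aux {d : ℕ} (B C F : Matrix (Fin d) (Fin d) ℝ) (H H' : Matrix (Fin d) (Fin d) ℂ)
    (hric : H' + B.map Complex.ofReal * H + H * (Bᵀ).map Complex.ofReal +
        H * C.map Complex.ofReal * H = F.map Complex.ofReal) :
    ((H.map Complex.im).adjugate * H'.map Complex.im).trace =
      (H.map Complex.im).det * (-2 * Matrix.trace (B + C * H.map Complex.re)) := by
  have hre : ∀ M : Matrix (Fin d) (Fin d) ℝ, (M.map Complex.ofReal).map Complex.re = M := by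
    intro M; ext i j; simp
  have him : ∀ M : Matrix (Fin d) (Fin d) ℝ, (M.map Complex.ofReal).map Complex.im = 0 := by
    intro M; ext i j; simp
  have h := congrArg (fun M => M.map Complex.im) hric
  simp only [Matrix.map_add Complex.im Complex.add_im, im_mul_aux, re_mul_aux, hre, him, zero_mul,
    mul_zero, add_zero, sub_zero, zero_add] at h
  set Y := H.map Complex.im
  set X := H.map Complex.re
  have h2 : H'.map Complex.im = -(B * Y + Y * Bᵀ + (X * C * Y + Y * C * X)) := by
    rw [eq_neg_iff_add_eq_zero, ← h]; abel
  have t1 : ∀ M : Matrix (Fin d) (Fin d) ℝ, (Y.adjugate * (M * Y)).trace = Y.det * M.trace := by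
    intro M
    rw [Matrix.trace_mul_comm, Matrix.mul_assoc, Matrix.mul_adjugate]
    simp
  have t2 : ∀ M : Matrix (Fin d) (Fin d) ℝ, (Y.adjugate * (Y * M)).trace = Y.det * M.trace := by
    intro M
    rw [← Matrix.mul_assoc, Matrix.adjugate_mul]
    simp
  rw [h2, Matrix.mul_assoc Y C X]
  simp only [Matrix.mul_neg, Matrix.mul_add, Matrix.trace_neg, Matrix.trace_add, t1, t2,
    Matrix.trace_transpose]
  rw [Matrix.trace_mul_comm X C]
  ring

/-- Determinant evolution law for solutions of the matrix Riccati equation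
`H' + BH + HBᵀ + HCH = F` with `H` complex symmetric and `Im H` positive definite:
`det Im H(t) = det Im H(t₀) · exp(−2∫_{t₀}^t tr(B(s) + C(s)·Re H(s)) ds)`. -/
theorem stmt10 (d : ℕ) (hd : 1 ≤ d) (I : Set ℝ) (hI : I.OrdConnected)
    (B C F : ℝ → Matrix (Fin d) (Fin d) ℝ)
    (hB : ContinuousOn B I) (hC : ContinuousOn C I) (hF : ContinuousOn F I)
    (hCs : ∀ t ∈ I, (C t).IsSymm) (hFs : ∀ t ∈ I, (F t).IsSymm)
    (H H' : ℝ → Matrix (Fin d) (Fin d) ℂ)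
    (hH : ∀ t ∈ I, ∀ i j : Fin d, HasDerivWithinAt (fun s => H s i j) (H' t i j) I t)
    (hH' : ContinuousOn H' I)
    (hHs : ∀ t ∈ I, (H t).IsSymm)
    (hHp : ∀ t ∈ I, ((H t).map Complex.im).PosDef)
    (hric : ∀ t ∈ I,
      H' t + (B t).map Complex.ofReal * H t + H t * ((B t)ᵀ).map Complex.ofReal +
        H t * (C t).map Complex.ofReal * H t = (F t).map Complex.ofReal) :
    ∀ t₀ ∈ I, ∀ t ∈ I,
      ((H t).map Complex.im).det =
        ((H t₀).map Complex.im).det *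
          Real.exp (-2 * ∫ s in t₀..t, Matrix.trace (B s + C s * (H s).map Complex.re)) := by
  intro t₀ ht₀ t ht
  have hK : Set.uIcc t₀ t ⊆ I := hI.uIcc_subset ht₀ ht
  have hHc : ∀ i j, ContinuousOn (fun s => H s i j) I :=
    fun i j s hs => (hH s hs i j).continuousWithinAt
  have hXc : ContinuousOn (fun s => (H s).map Complex.re) I := by
    refine continuousOn_pi.2 fun i => continuousOn_pi.2 fun j => ?_
    exact Complex.continuous_re.comp_continuousOn (hHc i j)
  have hac : ContinuousOn (fun s => Matrix.trace (B s + C s * (H s).map Complex.re)) I := by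
    have h1 : ContinuousOn (fun s => B s + C s * (H s).map Complex.re) I := hB.add (hC.mul hXc)
    exact (continuous_id.matrix_trace).comp_continuousOn h1
  set a : ℝ → ℝ := fun s => Matrix.trace (B s + C s * (H s).map Complex.re) with ha
  have hle : min t₀ t ≤ max t₀ t := min_le_max
  let b : ℝ → ℝ := Set.IccExtend hle ((Set.Icc (min t₀ t) (max t₀ t)).domRestrict a)
  have hbc : Continuous b := by
    have : ContinuousOn a (Set.Icc (min t₀ t) (max t₀ t)) := hac.mono hK
    exact this.domRestrict.Icc_extend'
  have hba : ∀ s ∈ Set.uIcc t₀ t, b s = a s := by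
    intro s hs
    exact Set.IccExtend_of_mem hle _ hs
  have hint : ∫ s in t₀..t, a s = ∫ s in t₀..t, b s :=
    intervalIntegral.integral_congr fun s hs => (hba s hs).symm
  have hD : ∀ s ∈ Set.uIcc t₀ t, HasDerivWithinAt
      (fun s => ((H s).map Complex.im).det * Real.exp (2 * ∫ u in t₀..s, b u)) 0
      (Set.uIcc t₀ t) s := by
    intro s hs
    have h1 : HasDerivWithinAt (fun s => ((H s).map Complex.im).det)
        (((H s).map Complex.im).det * (-2 * a s)) (Set.uIcc t₀ t) s := by
      rw [ha, ← trace_aux (B s) (C s) (F s) (H s) (H' s) (hric s (hK hs))]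
      refine jacobi_aux (fun s => (H s).map Complex.im) _ _ _ fun i j => ?_
      have := (hH s (hK hs) i j).mono hK
      exact (Complex.imCLM.hasFDerivAt.comp_hasDerivWithinAt s this)
    have h2 : HasDerivAt (fun s => ∫ u in t₀..s, b u) (b s) s :=
      intervalIntegral.integral_hasDerivAt_right (hbc.intervalIntegrable _ _)
        (hbc.stronglyMeasurableAtFilter _ _) hbc.continuousAt
    have h3 := h1.mul ((h2.const_mul 2).exp.hasDerivWithinAt (s := Set.uIcc t₀ t))
    refine h3.congr_deriv ?_
    rw [hba s hs]
    ring
  have hconst := (convex_uIcc t₀ t).norm_image_sub_le_of_norm_hasDerivWithin_le (C := 0) hD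
    (by simp) Set.left_mem_uIcc Set.right_mem_uIcc
  rw [zero_mul, norm_le_zero_iff, sub_eq_zero] at hconst
  simp only [intervalIntegral.integral_same, mul_zero, Real.exp_zero, mul_one] at hconst
  rw [hint, ← hconst, mul_assoc, ← Real.exp_add]
  simp
end
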